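/- Let D ⊆ Ψ(2^{<ℕ}) be a computable closed subset of ℝ² which is a dendrite, where 2^{<ℕ} denotes the full binary tree. Then there exists a computable tree of binary strings T⁺ ⊆ 2^{<ℕ} such that D ⊆ Ψ(T⁺) and ([0,1]×{0}) ∩ D = ([0,1]×{0}) ∩ Ψ(T⁺). -/

import Mathlib

open Set Metric

section TopDefs

variable {α : Type*} [TopologicalSpace α]

/-- `A ⊆ α` is an arc with endpoints `x` and `y`:
a homeomorphic (continuous injective) image of `[0,1]` sending `0 ↦ x`, `1 ↦ y`. -/
def IsArc (A : Set α) (x y : α) : Prop :=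
  ∃ f : Set.Icc (0:ℝ) 1 → α, Continuous f ∧ Function.Injective f ∧
    Set.range f = A ∧ f ⟨0, by norm_num⟩ = x ∧ f ⟨1, by norm_num⟩ = y

/-- A continuum: a nonempty compact connected set. -/
def IsContinuum (X : Set α) : Prop := IsCompact X ∧ IsConnected X

/-- Any two distinct points of `X` are endpoints of an arc contained in `X`. -/
def ArcwiseConnectedSet (X : Set α) : Prop :=
  ∀ x ∈ X, ∀ y ∈ X, x ≠ y → ∃ A, A ⊆ X ∧ IsArc A x y

/-- `X` is unicoherent: for all closed connected `A, B ⊆ X` with `A ∪ B = X`,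
the intersection `A ∩ B` is connected. -/
def UnicoherentSet (X : Set α) : Prop :=
  ∀ A B : Set α, A ⊆ X → B ⊆ X → IsClosed A → IsClosed B →
    IsConnected A → IsConnected B → A ∪ B = X → IsConnected (A ∩ B)

/-- Every subcontinuum of `X` is unicoherent. -/
def HereditarilyUnicoherent (X : Set α) : Prop :=
  ∀ Y, Y ⊆ X → IsContinuum Y → UnicoherentSet Y

/-- A dendroid: an arcwise connected, hereditarily unicoherent continuum. -/
def IsDendroid (X : Set α) : Prop :=
  IsContinuum X ∧ ArcwiseConnectedSet X ∧ HereditarilyUnicoherent X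

/-- The unit circle `S¹`. -/
def unitCircle : Set (EuclideanSpace ℝ (Fin 2)) := Metric.sphere 0 1

/-- A dendrite: a locally connected continuum containing no subset homeomorphic to `S¹`. -/
def IsDendrite (X : Set α) : Prop :=
  IsContinuum X ∧ LocallyConnectedSpace ↥X ∧
    ∀ S : Set α, S ⊆ X → IsEmpty (↥S ≃ₜ ↥unitCircle)

/-- `x` and `y` lie in the same arc-component of `Y`. -/
def SameArcComponent (Y : Set α) (x y : α) : Prop :=
  x = y ∨ ∃ A, A ⊆ Y ∧ IsArc A x y

/-- `x` is a ramification point of `X`: `X \ {x}` has at least three arc-components. -/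
def IsRamificationPoint (X : Set α) (x : α) : Prop :=
  x ∈ X ∧ ∃ u v w, u ∈ X \ {x} ∧ v ∈ X \ {x} ∧ w ∈ X \ {x} ∧
    ¬ SameArcComponent (X \ {x}) u v ∧ ¬ SameArcComponent (X \ {x}) u w ∧
    ¬ SameArcComponent (X \ {x}) v w

/-- A tree (as a continuum): a dendrite with finitely many ramification points. -/
def IsTreeContinuum (X : Set α) : Prop :=
  IsDendrite X ∧ {x | IsRamificationPoint X x}.Finite

end TopDefs

section CompDefs

/-- The rational open ball in `ℝ²` coded by `((q₁, q₂), r)`. -/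
def ballOfCode (c : (ℚ × ℚ) × ℚ) : Set (ℝ × ℝ) :=
  {x | dist x (((c.1.1 : ℝ), (c.1.2 : ℝ)) : ℝ × ℝ) < (c.2 : ℝ)}

/-- A closed set `F ⊆ ℝ²` is `Π⁰₁` if it is the complement of the union of the rational
open balls coded by some c.e. set of codes. -/
def IsPi01Closed (F : Set (ℝ × ℝ)) : Prop :=
  ∃ W : (ℚ × ℚ) × ℚ → Prop, REPred W ∧ F = Set.univ \ ⋃ c ∈ {c | W c}, ballOfCode c

/-- `F ⊆ ℝ²` is c.e. closed if the set of codes of rational open balls meeting `F` is c.e. -/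
def IsCEClosed (F : Set (ℝ × ℝ)) : Prop :=
  REPred (fun c : (ℚ × ℚ) × ℚ => (F ∩ ballOfCode c).Nonempty)

/-- A computable closed subset of `ℝ²`: both `Π⁰₁` and c.e. closed. -/
def IsComputableClosed (F : Set (ℝ × ℝ)) : Prop :=
  IsPi01Closed F ∧ IsCEClosed F

/-- A point of `ℝ²` is computable if the set of codes of rational open balls
containing it is c.e. -/
def IsComputablePoint (x : ℝ × ℝ) : Prop :=
  REPred (fun c : (ℚ × ℚ) × ℚ => x ∈ ballOfCode c)

end CompDefs

section PsiDefs

/-- A tree of binary strings: a set of finite binary strings closed under prefixes. -/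
def IsTreeOfStrings (T : Set (List Bool)) : Prop :=
  ∀ σ ∈ T, ∀ τ : List Bool, τ <+: σ → τ ∈ T

/-- The point `ψ(σ) ∈ ℝ²` associated with the binary string `σ`. -/
noncomputable def psiPt (σ : List Bool) : ℝ × ℝ :=
  ((3:ℝ) ^ (-(σ.length : ℤ)) / 2 +
      2 * ∑ i ∈ Finset.range σ.length,
        (if σ.getD i false then (3:ℝ) ^ (-((i : ℤ) + 1)) else 0),
    (2:ℝ) ^ (-(σ.length : ℤ)))

/-- The planar embedding `Ψ(T)` of a tree `T` of binary strings: the closure of the union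
of the segments from `ψ(σ⁻)` to `ψ(σ)` over nonempty `σ ∈ T` (together with the points
`ψ(σ)`, `σ ∈ T`, which makes no difference except for the degenerate trees `∅`, `{⟨⟩}`). -/
noncomputable def PsiSet (T : Set (List Bool)) : Set (ℝ × ℝ) :=
  closure (psiPt '' T ∪ ⋃ σ ∈ T, ⋃ (_ : σ ≠ []), segment ℝ (psiPt σ.dropLast) (psiPt σ))

end PsiDefs

/-! ### Effectivity of the coding of the rationals -/

namespace PsiProof

open Encodable

/-- The raw code of a rational (pair of the code of the numerator and the denominator). -/
def rawCode (q : ℚ) : ℕ := Nat.pair (encode q.num) q.den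

/-- absolute value of the numerator coded by `m` -/
def absN (m : ℕ) : ℕ := (m.unpair.1 + 1) / 2

/-- positive part of the numerator -/
def posN (m : ℕ) : ℕ := if m.unpair.1 % 2 = 0 then absN m else 0

/-- negative part of the numerator -/
def negN (m : ℕ) : ℕ := if m.unpair.1 % 2 = 0 then 0 else absN m

/-- denominator -/
def denN (m : ℕ) : ℕ := m.unpair.2

/-- `m` is a raw code of a rational. -/
def IsRaw (m : ℕ) : Prop :=
  0 < denN m ∧ ∀ k < denN m + 1, absN m % k = 0 → denN m % k = 0 → k = 1

theorem encInt_ofNat (n : ℕ) : encode (Int.ofNat n) = 2 * n := rfl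

theorem encInt_negSucc (n : ℕ) : encode (Int.negSucc n) = 2 * n + 1 := rfl

theorem absN_raw (q : ℚ) : absN (rawCode q) = q.num.natAbs := by
  unfold absN rawCode
  rw [Nat.unpair_pair]
  rcases q.num with n | n
  · rw [encInt_ofNat]; simp; omega
  · rw [encInt_negSucc]; simp; omega

theorem denN_raw (q : ℚ) : denN (rawCode q) = q.den := by
  unfold denN rawCode
  rw [Nat.unpair_pair]

theorem num_raw (q : ℚ) : (q.num : ℤ) = posN (rawCode q) - negN (rawCode q) := by
  unfold posN negN
  rw [absN_raw]
  unfold rawCode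
  rw [Nat.unpair_pair]
  rcases q.num with n | n
  · rw [encInt_ofNat]; simp
  · rw [encInt_negSucc]
    have : (2 * n + 1) % 2 ≠ 0 := by omega
    simp only [this, if_false]
    simp; omega

theorem val_raw (q : ℚ) :
    (q : ℝ) = (posN (rawCode q) : ℝ) / denN (rawCode q) - negN (rawCode q) / denN (rawCode q) := by
  have h := num_raw q
  have h2 : (q.num : ℝ) = posN (rawCode q) - negN (rawCode q) := by exact_mod_cast h
  rw [← sub_div, ← h2, denN_raw]
  exact Rat.cast_def q

theorem isRaw_raw (q : ℚ) : IsRaw (rawCode q) := by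
  unfold IsRaw
  rw [absN_raw, denN_raw]
  refine ⟨q.den_pos, fun k _ h1 h2 => ?_⟩
  have := q.reduced
  exact Nat.eq_one_of_dvd_coprimes this (Nat.dvd_of_mod_eq_zero h1) (Nat.dvd_of_mod_eq_zero h2)

theorem exists_of_isRaw {m : ℕ} (h : IsRaw m) : ∃ q : ℚ, rawCode q = m := by
  obtain ⟨h0, h1⟩ := h
  have hc : Nat.Coprime (absN m) (denN m) := by
    apply h1 _ (Nat.lt_succ_of_le (Nat.gcd_le_right _ h0))
    · exact Nat.mod_eq_zero_of_dvd (Nat.gcd_dvd_left _ _)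
    · exact Nat.mod_eq_zero_of_dvd (Nat.gcd_dvd_right _ _)
  obtain ⟨z, hz⟩ : ∃ z : ℤ, encode z = m.unpair.1 := by
    rcases Nat.even_or_odd' m.unpair.1 with ⟨k, hk | hk⟩
    · exact ⟨Int.ofNat k, by rw [encInt_ofNat, hk]⟩
    · exact ⟨Int.negSucc k, by rw [encInt_negSucc, hk]⟩
  have hza : z.natAbs = absN m := by
    unfold absN
    rw [← hz]
    rcases z with n | n
    · rw [encInt_ofNat]; simp; omega
    · rw [encInt_negSucc]; simp; omega
  refine ⟨⟨z, denN m, h0.ne', by rw [hza]; exact hc⟩, ?_⟩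
  unfold rawCode
  simp only [hz]
  exact Nat.pair_unpair m

theorem isRaw_iff (m : ℕ) : IsRaw m ↔ m ∈ Set.range (@encode ℚ Rat.instEncodable) :=
  ⟨fun h => exists_of_isRaw h, fun ⟨q, hq⟩ => hq ▸ isRaw_raw q⟩

open Classical in
/-- The number of raw codes below `m`. -/
noncomputable def cnt (m : ℕ) : ℕ := ((List.range m).filter (fun x => decide (IsRaw x))).length

/-- The code of an element of a `Primcodable` type. -/
def pcode {α : Type*} [h : Primcodable α] (a : α) : ℕ := @encode α h.toEncodable a

theorem encode_rat (q : ℚ) : pcode q = cnt (rawCode q) := by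
  unfold cnt
  rw [← List.countP_eq_length_filter]
  trans (List.range (@encode ℚ Rat.instEncodable q)).countP
    (fun x => @decide (x ∈ Set.range (@encode ℚ Rat.instEncodable))
      (Encodable.decidableRangeEncode ℚ x))
  · rfl
  · apply List.countP_congr
    intro x _
    simp only [decide_eq_true_eq, isRaw_iff]

/-! ### Primitive recursiveness -/

theorem primrec_absN : Primrec absN :=
  Primrec.nat_div.comp (Primrec.succ.comp (Primrec.fst.comp Primrec.unpair)) (Primrec.const 2)

theorem primrec_denN : Primrec denN := Primrec.snd.comp Primrec.unpair

theorem primrecPred_par : PrimrecPred (fun m : ℕ => m.unpair.1 % 2 = 0) :=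
  Primrec.eq.comp (Primrec.nat_mod.comp (Primrec.fst.comp Primrec.unpair) (Primrec.const 2))
    (Primrec.const 0)

theorem primrec_posN : Primrec posN :=
  Primrec.ite primrecPred_par primrec_absN (Primrec.const 0)

theorem primrec_negN : Primrec negN :=
  Primrec.ite primrecPred_par (Primrec.const 0) primrec_absN

theorem primrecPred_imp {α : Type*} [Primcodable α] {p q : α → Prop} (hp : PrimrecPred p)
    (hq : PrimrecPred q) : PrimrecPred (fun a => p a → q a) :=
  (hp.not.or hq).of_eq fun a => by tauto

theorem primrecPred_isRaw : PrimrecPred IsRaw := by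
  have hm : PrimrecPred (fun a : ℕ × ℕ =>
      absN a.2 % a.1 = 0 → denN a.2 % a.1 = 0 → a.1 = 1) := by
    refine primrecPred_imp ?_ (primrecPred_imp ?_ ?_)
    · exact Primrec.eq.comp (Primrec.nat_mod.comp (primrec_absN.comp Primrec.snd) Primrec.fst)
        (Primrec.const 0)
    · exact Primrec.eq.comp (Primrec.nat_mod.comp (primrec_denN.comp Primrec.snd) Primrec.fst)
        (Primrec.const 0)
    · exact Primrec.eq.comp Primrec.fst (Primrec.const 1)
  have hr : PrimrecRel (fun (k m : ℕ) =>
      absN m % k = 0 → denN m % k = 0 → k = 1) := hm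
  refine PrimrecPred.and ?_ ?_
  · exact Primrec.nat_lt.comp (Primrec.const 0) primrec_denN
  · exact hr.forall_lt.comp (Primrec.succ.comp primrec_denN) Primrec.id

theorem primrec_cnt : Primrec cnt := by
  classical
  have := (Primrec.listFilter primrecPred_isRaw)
  exact ((Primrec.list_length (α := ℕ)).comp (this.comp Primrec.list_range)).of_eq fun m => by
    unfold cnt; congr!

/-- numerator of a point -/
def numS (σ : List Bool) : ℕ := σ.foldl (fun a b => 3 * a + cond b 2 0) 0

theorem numS_append (σ : List Bool) (b : Bool) :
    numS (σ ++ [b]) = 3 * numS σ + cond b 2 0 := by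
  simp [numS]

theorem primrec_numS : Primrec numS := by
  refine Primrec.list_foldl (α := List Bool) (β := Bool)
    (h := fun _ p => 3 * p.1 + cond p.2 2 0) Primrec.id (Primrec.const 0) ?_
  refine Primrec.nat_add.comp ?_ ?_
  · exact Primrec.nat_mul.comp (Primrec.const 3) (Primrec.fst.comp Primrec.snd)
  · exact Primrec.cond (Primrec.snd.comp Primrec.snd) (Primrec.const 2) (Primrec.const 0)

theorem primrec_pow (k : ℕ) : Primrec (fun n : ℕ => k ^ n) :=
  (Primrec.nat_rec₁ 1 (Primrec.to₂ (Primrec.nat_mul.comp Primrec.snd (Primrec.const k)))).of_eq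
    fun n => by
      induction n with
      | zero => rfl
      | succ n ih => simp only [ih, pow_succ]

/-- value of a fraction -/
noncomputable def fval (a : ℕ × ℕ) : ℝ := (a.1 : ℝ) / a.2

def fadd (a b : ℕ × ℕ) : ℕ × ℕ := (a.1 * b.2 + b.1 * a.2, a.2 * b.2)

theorem fadd_pos {a b : ℕ × ℕ} (ha : 0 < a.2) (hb : 0 < b.2) : 0 < (fadd a b).2 :=
  Nat.mul_pos ha hb

theorem fval_fadd {a b : ℕ × ℕ} (ha : 0 < a.2) (hb : 0 < b.2) :
    fval (fadd a b) = fval a + fval b := by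
  have h1 : (a.2 : ℝ) ≠ 0 := by positivity
  have h2 : (b.2 : ℝ) ≠ 0 := by positivity
  unfold fval fadd
  push_cast
  field_simp

theorem fval_lt {a b : ℕ × ℕ} (ha : 0 < a.2) (hb : 0 < b.2) :
    fval a < fval b ↔ a.1 * b.2 < b.1 * a.2 := by
  unfold fval
  rw [div_lt_div_iff₀ (by positivity) (by positivity)]
  exact_mod_cast Iff.rfl

theorem primrec_fadd : Primrec₂ fadd := by
  refine Primrec.pair ?_ ?_
  · refine Primrec.nat_add.comp ?_ ?_
    · exact Primrec.nat_mul.comp (Primrec.fst.comp Primrec.fst) (Primrec.snd.comp Primrec.snd)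
    · exact Primrec.nat_mul.comp (Primrec.fst.comp Primrec.snd) (Primrec.snd.comp Primrec.fst)
  · exact Primrec.nat_mul.comp (Primrec.snd.comp Primrec.fst) (Primrec.snd.comp Primrec.snd)

/-- comparison `x + e + n₁ + n₂ < y + p₁ + p₂`  of fractions -/
theorem primrecPred_flt {α : Type*} [Primcodable α] {f g : α → ℕ × ℕ} (hf : Primrec f)
    (hg : Primrec g) : PrimrecPred (fun a => (f a).1 * (g a).2 < (g a).1 * (f a).2) :=
  Primrec.nat_lt.comp
    (Primrec.nat_mul.comp (Primrec.fst.comp hf) (Primrec.snd.comp hg))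
    (Primrec.nat_mul.comp (Primrec.fst.comp hg) (Primrec.snd.comp hf))

def fx (σ : List Bool) : ℕ × ℕ := (2 * numS σ + 1, 2 * 3 ^ σ.length)
def fe (σ : List Bool) : ℕ × ℕ := (1, 2 ^ σ.length)
def fp (m : ℕ) : ℕ × ℕ := (posN m, denN m)
def fn (m : ℕ) : ℕ × ℕ := (negN m, denN m)

theorem fx_pos (σ : List Bool) : 0 < (fx σ).2 := by unfold fx; positivity
theorem fe_pos (σ : List Bool) : 0 < (fe σ).2 := by unfold fe; positivity

theorem primrec_fx : Primrec fx := by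
  refine Primrec.pair ?_ ?_
  · exact Primrec.succ.comp (Primrec.nat_mul.comp (Primrec.const 2) primrec_numS)
  · exact Primrec.nat_mul.comp (Primrec.const 2) ((primrec_pow 3).comp Primrec.list_length)

theorem primrec_fe : Primrec fe :=
  Primrec.pair (Primrec.const 1) ((primrec_pow 2).comp Primrec.list_length)

theorem primrec_fp : Primrec fp := Primrec.pair primrec_posN primrec_denN
theorem primrec_fn : Primrec fn := Primrec.pair primrec_negN primrec_denN

/-- one-coordinate test `|x - q| + e < r` on codes -/
def Test1 (x e : ℕ × ℕ) (m k : ℕ) : Prop :=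
  ((fadd (fadd x e) (fadd (fn m) (fn k))).1 * (fadd (fp m) (fp k)).2 <
    (fadd (fp m) (fp k)).1 * (fadd (fadd x e) (fadd (fn m) (fn k))).2) ∧
  ((fadd (fadd (fp m) e) (fn k)).1 * (fadd (fadd x (fp k)) (fn m)).2 <
    (fadd (fadd x (fp k)) (fn m)).1 * (fadd (fadd (fp m) e) (fn k)).2)

theorem test1_iff {x e : ℕ × ℕ} (hx : 0 < x.2) (he : 0 < e.2) (q r : ℚ) :
    Test1 x e (rawCode q) (rawCode r) ↔ |fval x - q| + fval e < r := by
  have hq : (q : ℝ) = fval (fp (rawCode q)) - fval (fn (rawCode q)) := val_raw q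
  have hr : (r : ℝ) = fval (fp (rawCode r)) - fval (fn (rawCode r)) := val_raw r
  have h1 : 0 < (fp (rawCode q)).2 := (isRaw_raw q).1
  have h2 : 0 < (fn (rawCode q)).2 := (isRaw_raw q).1
  have h3 : 0 < (fp (rawCode r)).2 := (isRaw_raw r).1
  have h4 : 0 < (fn (rawCode r)).2 := (isRaw_raw r).1
  unfold Test1
  rw [← fval_lt (by simp only [fadd_pos, *]) (by simp only [fadd_pos, *]),
    ← fval_lt (by simp only [fadd_pos, *]) (by simp only [fadd_pos, *])]
  simp only [fval_fadd, fadd_pos, hx, he, h1, h2, h3, h4]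
  rw [← lt_sub_iff_add_lt (a := |fval x - q|), abs_lt, hq, hr]
  constructor
  · rintro ⟨a, b⟩; constructor <;> linarith
  · rintro ⟨a, b⟩; constructor <;> linarith

theorem primrecPred_test1 {α : Type*} [Primcodable α] {x e : α → ℕ × ℕ} {m k : α → ℕ}
    (hx : Primrec x) (he : Primrec e) (hm : Primrec m) (hk : Primrec k) :
    PrimrecPred (fun a => Test1 (x a) (e a) (m a) (k a)) := by
  have pm := primrec_fp.comp hm
  have pk := primrec_fp.comp hk
  have nm := primrec_fn.comp hm
  have nk := primrec_fn.comp hk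
  refine PrimrecPred.and ?_ ?_
  · exact primrecPred_flt (primrec_fadd.comp (primrec_fadd.comp hx he) (primrec_fadd.comp nm nk))
      (primrec_fadd.comp pm pk)
  · exact primrecPred_flt (primrec_fadd.comp (primrec_fadd.comp pm he) nk)
      (primrec_fadd.comp (primrec_fadd.comp hx pk) nm)

/-- raw code of a ball -/
def rawBall (c : (ℚ × ℚ) × ℚ) : ℕ :=
  Nat.pair (Nat.pair (rawCode c.1.1) (rawCode c.1.2)) (rawCode c.2)

def m1 (m : ℕ) : ℕ := m.unpair.1.unpair.1
def m2 (m : ℕ) : ℕ := m.unpair.1.unpair.2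
def m3 (m : ℕ) : ℕ := m.unpair.2

theorem primrec_m1 : Primrec m1 :=
  Primrec.fst.comp (Primrec.unpair.comp (Primrec.fst.comp Primrec.unpair))
theorem primrec_m2 : Primrec m2 :=
  Primrec.snd.comp (Primrec.unpair.comp (Primrec.fst.comp Primrec.unpair))
theorem primrec_m3 : Primrec m3 := Primrec.snd.comp Primrec.unpair

theorem m1_raw (c : (ℚ × ℚ) × ℚ) : m1 (rawBall c) = rawCode c.1.1 := by simp [m1, rawBall]
theorem m2_raw (c : (ℚ × ℚ) × ℚ) : m2 (rawBall c) = rawCode c.1.2 := by simp [m2, rawBall]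
theorem m3_raw (c : (ℚ × ℚ) × ℚ) : m3 (rawBall c) = rawCode c.2 := by simp [m3, rawBall]

/-- code of a ball from its raw code -/
noncomputable def cntBall (m : ℕ) : ℕ := Nat.pair (Nat.pair (cnt (m1 m)) (cnt (m2 m))) (cnt (m3 m))

theorem primrec_cntBall : Primrec cntBall :=
  Primrec₂.natPair.comp
    (Primrec₂.natPair.comp (primrec_cnt.comp primrec_m1) (primrec_cnt.comp primrec_m2))
    (primrec_cnt.comp primrec_m3)

theorem encode_ball (c : (ℚ × ℚ) × ℚ) : pcode c = cntBall (rawBall c) := by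
  unfold cntBall
  rw [m1_raw, m2_raw, m3_raw, ← encode_rat, ← encode_rat, ← encode_rat]
  rfl

/-- The test: the closed ball around the point of `σ` of radius `2^{-|σ|}` is in the ball `c`. -/
def Test (σ : List Bool) (c : (ℚ × ℚ) × ℚ) : Prop :=
  (|fval (fx σ) - c.1.1| + fval (fe σ) < c.2) ∧ (|fval (fe σ) - c.1.2| + fval (fe σ) < c.2)

theorem exists_stages {W : (ℚ × ℚ) × ℚ → Prop} (hW : REPred W) :
    ∃ V : ℕ → (ℚ × ℚ) × ℚ → Prop, (∀ n k c, n ≤ k → V n c → V k c) ∧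
      (∀ c, W c ↔ ∃ n, V n c) ∧
      ComputablePred (fun σ : List Bool => ∀ c, V σ.length c → ¬ Test σ c) := by
  obtain ⟨C, hC⟩ := Nat.Partrec.Code.exists_code.1 hW
  have hdom : ∀ c, W c ↔ (C.eval (pcode c)).Dom := by
    intro c
    rw [hC]
    simp only [pcode]
    rw [@Encodable.encodek _ Primcodable.toEncodable]
    simp [Part.assert]
  refine ⟨fun n c => rawBall c < n ∧ (C.evaln n (pcode c)).isSome = true, ?_, ?_, ?_⟩
  · rintro n k c hnk ⟨h1, h2⟩
    refine ⟨by omega, ?_⟩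
    obtain ⟨x, hx⟩ := Option.isSome_iff_exists.1 h2
    exact Option.isSome_iff_exists.2 ⟨x, Nat.Partrec.Code.evaln_mono hnk hx⟩
  · intro c
    rw [hdom, Part.dom_iff_mem]
    constructor
    · rintro ⟨y, hy⟩
      obtain ⟨k, hk⟩ := Nat.Partrec.Code.evaln_complete.1 hy
      refine ⟨max k (rawBall c + 1), by omega, ?_⟩
      exact Option.isSome_iff_exists.2 ⟨y, Nat.Partrec.Code.evaln_mono (le_max_left _ _) hk⟩
    · rintro ⟨n, _, h⟩
      obtain ⟨x, hx⟩ := Option.isSome_iff_exists.1 h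
      exact ⟨x, Nat.Partrec.Code.evaln_sound hx⟩
  · have hb : PrimrecRel (fun (m : ℕ) (σ : List Bool) =>
        IsRaw (m1 m) → IsRaw (m2 m) → IsRaw (m3 m) →
        (C.evaln σ.length (cntBall m)).isSome = true →
        ¬ (Test1 (fx σ) (fe σ) (m1 m) (m3 m) ∧ Test1 (fe σ) (fe σ) (m2 m) (m3 m))) := by
      have a1 : Primrec (fun a : ℕ × List Bool => m1 a.1) := primrec_m1.comp Primrec.fst
      have a2 : Primrec (fun a : ℕ × List Bool => m2 a.1) := primrec_m2.comp Primrec.fst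
      have a3 : Primrec (fun a : ℕ × List Bool => m3 a.1) := primrec_m3.comp Primrec.fst
      have b1 : Primrec (fun a : ℕ × List Bool => fx a.2) := primrec_fx.comp Primrec.snd
      have b2 : Primrec (fun a : ℕ × List Bool => fe a.2) := primrec_fe.comp Primrec.snd
      refine primrecPred_imp (primrecPred_isRaw.comp a1) (primrecPred_imp
        (primrecPred_isRaw.comp a2) (primrecPred_imp (primrecPred_isRaw.comp a3)
        (primrecPred_imp ?_ (PrimrecPred.not (PrimrecPred.and
          (primrecPred_test1 b1 b2 a1 a3) (primrecPred_test1 b2 b2 a2 a3))))))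
      refine Primrec.eq.comp ?_ (Primrec.const true)
      refine Primrec.option_isSome.comp ?_
      exact Nat.Partrec.Code.primrec_evaln.comp (Primrec.pair (Primrec.pair
        (Primrec.list_length.comp Primrec.snd) (Primrec.const C))
        (primrec_cntBall.comp Primrec.fst))
    have hp : PrimrecPred (fun σ : List Bool => ∀ c : (ℚ × ℚ) × ℚ,
        (rawBall c < σ.length ∧ (C.evaln σ.length (pcode c)).isSome = true) → ¬ Test σ c) := by
      have h2 := hb.forall_mem_list
      have h3 := PrimrecRel.comp (f := fun σ : List Bool => List.range σ.length)
        (g := fun σ : List Bool => σ)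
        h2 (Primrec.list_range.comp Primrec.list_length) Primrec.id
      refine h3.of_eq fun σ => ?_
      simp only [List.mem_range]
      constructor
      · rintro h c ⟨hc1, hc2⟩
        have := h (rawBall c) hc1
        rw [m1_raw, m2_raw, m3_raw, ← encode_ball,
          test1_iff (fx_pos _) (fe_pos _), test1_iff (fe_pos _) (fe_pos _)] at this
        exact this (isRaw_raw _) (isRaw_raw _) (isRaw_raw _) hc2
      · intro h m hm r1 r2 r3 hev
        obtain ⟨q1, h1⟩ := exists_of_isRaw r1
        obtain ⟨q2, h2⟩ := exists_of_isRaw r2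
        obtain ⟨r, h3⟩ := exists_of_isRaw r3
        have hmm : rawBall ((q1, q2), r) = m := by
          unfold rawBall
          simp only [h1, h2, h3, m1, m2, m3, Nat.pair_unpair]
        have := h ((q1, q2), r) ⟨by rw [hmm]; exact hm, by rw [encode_ball, hmm]; exact hev⟩
        rw [← h1, ← h2, ← h3,
          test1_iff (fx_pos _) (fe_pos _), test1_iff (fe_pos _) (fe_pos _)]
        exact this
    obtain ⟨d, hd⟩ := hp
    exact ⟨d, hd.to_comp⟩


/-! ### Geometry -/

/-- The scale `2^{-|σ|}`. -/
noncomputable def ee (σ : List Bool) : ℝ := fval (fe σ)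

theorem ee_eq (σ : List Bool) : ee σ = (1 / 2 : ℝ) ^ σ.length := by
  simp [ee, fval, fe]

theorem ee_pos (σ : List Bool) : 0 < ee σ := by rw [ee_eq]; positivity

theorem ee_append (σ : List Bool) (b : Bool) : ee (σ ++ [b]) = ee σ / 2 := by
  simp only [ee_eq, List.length_append, List.length_singleton, pow_succ]
  ring

theorem psiPt_eq (σ : List Bool) : psiPt σ = (fval (fx σ), ee σ) := by
  refine Prod.ext ?_ ?_
  · induction σ using List.reverseRecOn with
    | nil => simp [psiPt, fval, fx, numS]
    | append_singleton σ b ih =>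
      have hs : ∑ i ∈ Finset.range σ.length,
          (if (σ ++ [b]).getD i false then (3:ℝ) ^ (-((i : ℤ) + 1)) else 0) =
          ∑ i ∈ Finset.range σ.length,
          (if σ.getD i false then (3:ℝ) ^ (-((i : ℤ) + 1)) else 0) := by
        refine Finset.sum_congr rfl fun i hi => ?_
        rw [List.getD_append _ _ _ _ (Finset.mem_range.1 hi)]
      have hl : (σ ++ [b]).getD σ.length false = b := by simp
      simp only [psiPt] at ih ⊢
      rw [List.length_append, List.length_singleton, Finset.sum_range_succ, hs, hl]
      have ih' : ∑ i ∈ Finset.range σ.length,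
          (if σ.getD i false then (3:ℝ) ^ (-((i : ℤ) + 1)) else 0) =
          (fval (fx σ) - (3:ℝ) ^ (-(σ.length : ℤ)) / 2) / 2 := by linarith
      rw [ih']
      simp only [fval, fx, numS_append, List.length_append, List.length_singleton]
      have h3 : (3:ℝ) ^ (-((σ.length + 1 : ℕ) : ℤ)) = 1 / (3 * 3 ^ σ.length) := by
        rw [zpow_neg, zpow_natCast, pow_succ]; ring
      have h3' : (3:ℝ) ^ (-((σ.length : ℤ) + 1)) = 1 / (3 * 3 ^ σ.length) := by
        rw [← h3]; push_cast; rfl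
      have h4 : (3:ℝ) ^ (-(σ.length : ℤ)) = 1 / 3 ^ σ.length := by
        rw [zpow_neg, zpow_natCast]; ring
      rw [h3, h3', h4]
      have hpos : (3:ℝ) ^ σ.length ≠ 0 := by positivity
      cases b <;> simp [pow_succ] <;> field_simp <;> ring
  · simp [psiPt, ee_eq]

theorem fx_append (σ : List Bool) (b : Bool) :
    |fval (fx σ) - fval (fx (σ ++ [b]))| ≤ ee σ / 2 := by
  have hk : (1 / 3 : ℝ) ^ σ.length ≤ (1 / 2 : ℝ) ^ σ.length :=
    pow_le_pow_left₀ (by norm_num) (by norm_num) _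
  have hp : (0:ℝ) < (1 / 3 : ℝ) ^ σ.length := by positivity
  have hx : fval (fx (σ ++ [b])) = fval (fx σ) + (cond b 1 (-1)) * ((1 / 3 : ℝ) ^ σ.length / 3) := by
    simp only [fval, fx, numS_append, List.length_append, List.length_singleton]
    have hpos : (3:ℝ) ^ σ.length ≠ 0 := by positivity
    cases b <;> simp [pow_succ] <;> field_simp <;> ring
  rw [hx, ee_eq, abs_le]
  cases b <;> constructor <;> simp only [cond_true, cond_false] <;> linarith

theorem dist_step (σ : List Bool) (b : Bool) :
    dist (psiPt σ) (psiPt (σ ++ [b])) ≤ ee σ / 2 := by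
  rw [psiPt_eq, psiPt_eq, Prod.dist_eq, max_le_iff]
  refine ⟨fx_append σ b, ?_⟩
  simp only [ee_append]
  rw [Real.dist_eq, abs_le]
  have := ee_pos σ
  constructor <;> linarith

theorem dist_append (τ ρ : List Bool) :
    dist (psiPt τ) (psiPt (τ ++ ρ)) ≤ ee τ - ee (τ ++ ρ) := by
  induction ρ using List.reverseRecOn with
  | nil => simp
  | append_singleton ρ b ih =>
    rw [← List.append_assoc, ee_append]
    have := dist_step (τ ++ ρ) b
    have := dist_triangle (psiPt τ) (psiPt (τ ++ ρ)) (psiPt (τ ++ ρ ++ [b]))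
    linarith

/-- The piece of the tree belonging to `σ`. -/
noncomputable def piece (σ : List Bool) : Set (ℝ × ℝ) :=
  segment ℝ (psiPt σ.dropLast) (psiPt σ)

theorem psiSet_eq (T : Set (List Bool)) : PsiSet T = closure (⋃ σ ∈ T, piece σ) := by
  unfold PsiSet
  congr 1
  ext x
  simp only [Set.mem_union, Set.mem_image, Set.mem_iUnion]
  constructor
  · rintro (⟨σ, hσ, rfl⟩ | ⟨σ, hσ, _, hx⟩)
    · exact ⟨σ, hσ, right_mem_segment _ _ _⟩
    · exact ⟨σ, hσ, hx⟩
  · rintro ⟨σ, hσ, hx⟩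
    by_cases h : σ = []
    · subst h
      left
      refine ⟨[], hσ, ?_⟩
      unfold piece at hx
      simp only [List.dropLast_nil, segment_same, Set.mem_singleton_iff] at hx
      exact hx.symm
    · exact Or.inr ⟨σ, hσ, h, hx⟩

theorem isClosed_piece (σ : List Bool) : IsClosed (piece σ) := by
  unfold piece
  rw [segment_eq_image_lineMap]
  exact (isCompact_Icc.image (by fun_prop)).isClosed

theorem piece_subset_ball {τ σ : List Bool} (h : τ <+: σ) :
    piece σ ⊆ closedBall (psiPt τ) (ee τ) := by
  obtain ⟨ρ, rfl⟩ := h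
  have hmem : ∀ ρ, psiPt (τ ++ ρ) ∈ closedBall (psiPt τ) (ee τ) := fun ρ => by
    rw [mem_closedBall, dist_comm]
    have := dist_append τ ρ
    have := ee_pos (τ ++ ρ)
    linarith
  refine (convex_closedBall _ _).segment_subset ?_ (hmem ρ)
  rcases List.eq_nil_or_concat' ρ with rfl | ⟨ρ', b, rfl⟩
  · rw [List.append_nil]
    rcases List.eq_nil_or_concat' τ with rfl | ⟨τ', b, rfl⟩
    · simpa using hmem []
    · rw [List.dropLast_concat, mem_closedBall, ee_append]
      exact dist_step _ _
  · rw [← List.append_assoc, List.dropLast_concat]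
    exact hmem ρ'

theorem piece_height (σ : List Bool) {x : ℝ × ℝ} (hx : x ∈ piece σ) : ee σ ≤ x.2 := by
  have hc : Convex ℝ {x : ℝ × ℝ | ee σ ≤ x.2} :=
    convex_halfSpace_ge (f := fun x : ℝ × ℝ => x.2) (IsLinearMap.mk (fun _ _ => rfl) (fun _ _ => rfl)) _
  refine hc.segment_subset ?_ ?_ hx
  · rw [Set.mem_setOf_eq, psiPt_eq]
    rcases List.eq_nil_or_concat' σ with rfl | ⟨τ', b, rfl⟩
    · simp
    · rw [List.dropLast_concat, ee_append]
      have := ee_pos τ'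
      simp only
      linarith
  · rw [Set.mem_setOf_eq, psiPt_eq]

theorem test_iff (σ : List Bool) (c : (ℚ × ℚ) × ℚ) :
    Test σ c ↔ dist (psiPt σ) ((c.1.1 : ℝ), (c.1.2 : ℝ)) + ee σ < c.2 := by
  rw [psiPt_eq, Prod.dist_eq, ← lt_sub_iff_add_lt, max_lt_iff, lt_sub_iff_add_lt,
    lt_sub_iff_add_lt]
  rfl

/-- A point of the full tree is in a piece or well approximated at every level. -/
theorem mem_full {d : ℝ × ℝ} (hd : d ∈ PsiSet Set.univ) :
    (∃ σ, d ∈ piece σ) ∨ ∀ n : ℕ, ∃ τ : List Bool, τ.length = n ∧ dist d (psiPt τ) ≤ ee τ := by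
  by_cases h : ∃ σ, d ∈ piece σ
  · exact Or.inl h
  right
  intro n
  rw [psiSet_eq] at hd
  have hsub : (⋃ σ ∈ (Set.univ : Set (List Bool)), piece σ) ⊆
      (⋃ σ ∈ {σ : List Bool | σ.length ≤ n}, piece σ) ∪
      ⋃ τ ∈ {τ : List Bool | τ.length = n}, closedBall (psiPt τ) (ee τ) := by
    intro x hx
    simp only [Set.mem_iUnion] at hx
    obtain ⟨σ, _, hx⟩ := hx
    by_cases hl : σ.length ≤ n
    · left
      simp only [Set.mem_iUnion]
      exact ⟨σ, hl, hx⟩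
    · right
      simp only [Set.mem_iUnion]
      refine ⟨σ.take n, ?_, piece_subset_ball (List.take_prefix n σ) hx⟩
      simp only [Set.mem_setOf_eq, List.length_take]
      omega
  have hcl : IsClosed ((⋃ σ ∈ {σ : List Bool | σ.length ≤ n}, piece σ) ∪
      ⋃ τ ∈ {τ : List Bool | τ.length = n}, closedBall (psiPt τ) (ee τ)) := by
    refine IsClosed.union ?_ ?_
    · exact (List.finite_length_le Bool n).isClosed_biUnion fun σ _ => isClosed_piece σ
    · exact (List.finite_length_eq Bool n).isClosed_biUnion fun σ _ => isClosed_closedBall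
  rcases closure_minimal hsub hcl hd with hx | hx
  · simp only [Set.mem_iUnion] at hx
    obtain ⟨σ, _, hx⟩ := hx
    exact (h ⟨σ, hx⟩).elim
  · simp only [Set.mem_iUnion] at hx
    obtain ⟨τ, hτ, hx⟩ := hx
    exact ⟨τ, hτ, hx⟩

end PsiProof

open PsiProof in
theorem computable_dendrite_in_full_psiSet_extends_to_computable_tree
    (D : Set (ℝ × ℝ)) (hsub : D ⊆ PsiSet (Set.univ : Set (List Bool)))
    (hcomp : IsComputableClosed D) (hden : IsDendrite D) :
    ∃ T : Set (List Bool), ComputablePred (fun σ : List Bool => σ ∈ T) ∧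
      IsTreeOfStrings T ∧ D ⊆ PsiSet T ∧
      (Set.Icc (0:ℝ) 1 ×ˢ ({0} : Set ℝ)) ∩ D =
        (Set.Icc (0:ℝ) 1 ×ˢ ({0} : Set ℝ)) ∩ PsiSet T := by
  obtain ⟨⟨W, hW, hD⟩, -⟩ := hcomp
  obtain ⟨V, hmono, hWV, hc⟩ := exists_stages hW
  have hDmem : ∀ x, x ∈ D ↔ ∀ c, W c → x ∉ ballOfCode c := by
    intro x
    rw [hD]
    simp
  set T : Set (List Bool) := {σ | ∀ c, V σ.length c → ¬ Test σ c} with hT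
  -- strings close to a point of `D` are in `T`
  have hnear : ∀ d ∈ D, ∀ σ, dist d (psiPt σ) ≤ ee σ → σ ∈ T := by
    intro d hd σ hdist c hV ht
    rw [test_iff] at ht
    apply (hDmem d).1 hd c ((hWV c).2 ⟨_, hV⟩)
    have := dist_triangle d (psiPt σ) ((c.1.1 : ℝ), (c.1.2 : ℝ))
    show dist d ((c.1.1 : ℝ), (c.1.2 : ℝ)) < c.2
    linarith
  have hDT : D ⊆ PsiSet T := by
    intro d hd
    rw [psiSet_eq]
    rcases mem_full (hsub hd) with ⟨σ, hσ⟩ | h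
    · apply subset_closure
      simp only [Set.mem_iUnion]
      exact ⟨σ, hnear d hd σ (piece_subset_ball (List.prefix_refl σ) hσ), hσ⟩
    · rw [Metric.mem_closure_iff]
      intro ε hε
      obtain ⟨n, hn⟩ := exists_pow_lt_of_lt_one hε (by norm_num : (1 / 2 : ℝ) < 1)
      obtain ⟨τ, hτ, hdist⟩ := h n
      refine ⟨psiPt τ, ?_, ?_⟩
      · simp only [Set.mem_iUnion]
        exact ⟨τ, hnear d hd τ hdist, right_mem_segment _ _ _⟩
      · rw [ee_eq, hτ] at hdist
        linarith
  refine ⟨T, hc, ?_, hDT, ?_⟩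
  · rintro σ hσ τ ⟨ρ, rfl⟩ c hV ht
    refine hσ c (hmono _ _ _ (by simp) hV) ?_
    rw [test_iff] at ht ⊢
    have := dist_append τ ρ
    have := dist_triangle_left (psiPt (τ ++ ρ)) ((c.1.1 : ℝ), (c.1.2 : ℝ)) (psiPt τ)
    linarith
  · refine Set.Subset.antisymm (Set.inter_subset_inter_right _ hDT) ?_
    rintro x ⟨hx0, hx⟩
    refine ⟨hx0, ?_⟩
    have hx2 : x.2 = 0 := hx0.2
    by_contra hxD
    rw [hDmem] at hxD
    push Not at hxD
    obtain ⟨c, hWc, hxc⟩ := hxD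
    obtain ⟨s, hs⟩ := (hWV c).1 hWc
    have hxc' : dist x ((c.1.1 : ℝ), (c.1.2 : ℝ)) < c.2 := hxc
    rw [psiSet_eq, Metric.mem_closure_iff] at hx
    set η : ℝ := min (((c.2 : ℝ) - dist x ((c.1.1 : ℝ), (c.1.2 : ℝ))) / 3) ((1 / 2) ^ s) with hη
    have hηpos : 0 < η := by
      apply lt_min
      · linarith
      · positivity
    obtain ⟨e, he, hdist⟩ := hx η hηpos
    simp only [Set.mem_iUnion] at he
    obtain ⟨σ, hσ, he⟩ := he
    have h1 : ee σ ≤ e.2 := piece_height σ he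
    have h2 : |x.2 - e.2| ≤ dist x e := by
      rw [Prod.dist_eq]; exact le_max_right _ _
    have h3 : ee σ < η := by
      rw [hx2, zero_sub, abs_neg] at h2
      have := le_abs_self e.2
      linarith
    have hη1 : η ≤ ((c.2 : ℝ) - dist x ((c.1.1 : ℝ), (c.1.2 : ℝ))) / 3 := min_le_left _ _
    have hη2 : η ≤ (1 / 2) ^ s := min_le_right _ _
    have hlen : s ≤ σ.length := by
      by_contra hlt
      have : (1 / 2 : ℝ) ^ s ≤ (1 / 2) ^ σ.length :=
        pow_le_pow_of_le_one (by norm_num) (by norm_num) (by omega)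
      rw [ee_eq] at h3
      linarith
    apply hσ c (hmono _ _ _ hlen hs)
    rw [test_iff]
    have h4 : dist e (psiPt σ) ≤ ee σ := piece_subset_ball (List.prefix_refl σ) he
    have h5 := dist_triangle_left (psiPt σ) x e
    have h6 := dist_triangle (psiPt σ) x ((c.1.1 : ℝ), (c.1.2 : ℝ))
    rw [dist_comm e x] at h5
    linarith
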